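/- arXiv:1302.5535 — 2 statements merged into one kernel-verified Lean document; each statement's English description precedes it below -/
import Mathlib

section
/- Let A ∈ ℝ^{n×n} be nonsingular and 1 ≤ k ≤ d(A) − 1. Then the ideal GMRES approximation does not depend on whether the polynomials and/or the maximizing vectors are taken real or complex: φ_{k,ℝ,ℝ}(A) = φ_{k,ℂ,ℝ}(A) = φ_{k,ℝ,ℂ}(A) = φ_{k,ℂ,ℂ}(A). -/
open Polynomial Matrix

/-- The Euclidean norm of a real vector. -/
noncomputable def euclNorm {ι : Type*} [Fintype ι] (v : ι → ℝ) : ℝ :=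
  Real.sqrt (∑ i, v i ^ 2)

/-- The Euclidean norm of a complex vector. -/
noncomputable def euclNormC {ι : Type*} [Fintype ι] (v : ι → ℂ) : ℝ :=
  Real.sqrt (∑ i, ‖v i‖ ^ 2)

/-- The Euclidean inner product of two real vectors. -/
noncomputable def edot {ι : Type*} [Fintype ι] (u v : ι → ℝ) : ℝ := ∑ i, u i * v i

/-- `p ∈ π_k`: real polynomials of degree at most `k` with value `1` at the origin. -/
def IsPik (k : ℕ) (p : Polynomial ℝ) : Prop := p.natDegree ≤ k ∧ p.eval 0 = 1

/-- `p ∈ π_{k,ℂ}`: complex polynomials of degree at most `k` with value `1` at the origin. -/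
def IsPikC (k : ℕ) (p : Polynomial ℂ) : Prop := p.natDegree ≤ k ∧ p.eval 0 = 1

/-- The `k`-th GMRES residual norm `min_{p ∈ π_k} ‖p(A)v‖`. -/
noncomputable def gmresVal {ι : Type*} [Fintype ι] [DecidableEq ι]
    (A : Matrix ι ι ℝ) (k : ℕ) (v : ι → ℝ) : ℝ :=
  sInf {s : ℝ | ∃ p : Polynomial ℝ, IsPik k p ∧ s = euclNorm ((Polynomial.aeval A p).mulVec v)}

/-- The `k`-th worst-case GMRES approximation `Ψ_k(A) = max_{‖v‖=1} min_{p ∈ π_k} ‖p(A)v‖`. -/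
noncomputable def Psi {ι : Type*} [Fintype ι] [DecidableEq ι]
    (A : Matrix ι ι ℝ) (k : ℕ) : ℝ :=
  sSup {r : ℝ | ∃ v : ι → ℝ, euclNorm v = 1 ∧ r = gmresVal A k v}

/-- `d(A)`: the degree of the minimal polynomial of `A`. -/
noncomputable def dA {ι : Type*} [Fintype ι] [DecidableEq ι] (A : Matrix ι ι ℝ) : ℕ :=
  (minpoly ℝ A).natDegree

/-- `d(A,b)`: the smallest degree of a nonzero polynomial `q` with `q(A)b = 0`. -/
noncomputable def dAb {ι : Type*} [Fintype ι] [DecidableEq ι]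
    (A : Matrix ι ι ℝ) (b : ι → ℝ) : ℕ :=
  sInf {d : ℕ | ∃ q : Polynomial ℝ, q ≠ 0 ∧ q.natDegree = d ∧ (Polynomial.aeval A q).mulVec b = 0}

/-- `r = GMRES(A,b,k)`: `r = p(A)b` for some `p ∈ π_k` minimizing `‖p(A)b‖` over `π_k`. -/
def IsGmresRes {ι : Type*} [Fintype ι] [DecidableEq ι]
    (A : Matrix ι ι ℝ) (k : ℕ) (b r : ι → ℝ) : Prop :=
  ∃ p : Polynomial ℝ, IsPik k p ∧ r = (Polynomial.aeval A p).mulVec b ∧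
    ∀ q : Polynomial ℝ, IsPik k q → euclNorm r ≤ euclNorm ((Polynomial.aeval A q).mulVec b)

/-- `p` is the `k`-th GMRES polynomial of `A` and `b`: `p ∈ π_k` minimizes `‖p(A)b‖`. -/
def IsGmresPoly {ι : Type*} [Fintype ι] [DecidableEq ι]
    (A : Matrix ι ι ℝ) (k : ℕ) (b : ι → ℝ) (p : Polynomial ℝ) : Prop :=
  IsPik k p ∧ ∀ q : Polynomial ℝ, IsPik k q →
    euclNorm ((Polynomial.aeval A p).mulVec b) ≤ euclNorm ((Polynomial.aeval A q).mulVec b)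

/-- The Krylov subspace `K_k(A,b) = span{b, Ab, …, A^{k-1}b}`. -/
noncomputable def krylov {ι : Type*} [Fintype ι] [DecidableEq ι]
    (A : Matrix ι ι ℝ) (k : ℕ) (b : ι → ℝ) : Submodule ℝ (ι → ℝ) :=
  Submodule.span ℝ (Set.range fun i : Fin k => (A ^ (i : ℕ)).mulVec b)

/-- `b` satisfies the cross equality for `A` and step `k`. -/
def CrossEq {ι : Type*} [Fintype ι] [DecidableEq ι]
    (A : Matrix ι ι ℝ) (k : ℕ) (b : ι → ℝ) : Prop :=
  ∀ r s : ι → ℝ, IsGmresRes A k b r → IsGmresRes Aᵀ k ((euclNorm r)⁻¹ • r) s →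
    b = (euclNorm s)⁻¹ • s

/-- The Krylov matrix `K(v) = [Av, A²v, …, A^k v]`. -/
noncomputable def Kmat {n : ℕ} (A : Matrix (Fin n) (Fin n) ℝ) (k : ℕ) (v : Fin n → ℝ) :
    Matrix (Fin n) (Fin k) ℝ :=
  Matrix.of fun i j => (A ^ ((j : ℕ) + 1)).mulVec v i

/-- `γ(v) = (K(v)ᵀK(v))⁻¹ K(v)ᵀ v`. -/
noncomputable def gammaVec {n : ℕ} (A : Matrix (Fin n) (Fin n) ℝ) (k : ℕ) (v : Fin n → ℝ) :
    Fin k → ℝ :=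
  ((Kmat A k v)ᵀ * Kmat A k v)⁻¹ *ᵥ ((Kmat A k v)ᵀ *ᵥ v)

/-- `g(v) = min_{c ∈ ℝ^k} ‖v - K(v)c‖²`. -/
noncomputable def gFun {n : ℕ} (A : Matrix (Fin n) (Fin n) ℝ) (k : ℕ) (v : Fin n → ℝ) : ℝ :=
  sInf {s : ℝ | ∃ c : Fin k → ℝ, s = euclNorm (v - Kmat A k v *ᵥ c) ^ 2}

/-- `p(z; c) = 1 - ∑_{j=1}^k c_j z^j`. -/
noncomputable def pPoly {k : ℕ} (c : Fin k → ℝ) : Polynomial ℝ :=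
  1 - ∑ j : Fin k, Polynomial.C (c j) * Polynomial.X ^ ((j : ℕ) + 1)

/-- `f(c,v) = ‖p(A;c)v‖²`. -/
noncomputable def fFun {n k : ℕ} (A : Matrix (Fin n) (Fin n) ℝ) (c : Fin k → ℝ)
    (v : Fin n → ℝ) : ℝ :=
  euclNorm ((Polynomial.aeval A (pPoly c)).mulVec v) ^ 2

/-- `F(c,v) = f(c,v)/(vᵀv)`. -/
noncomputable def FFun {n k : ℕ} (A : Matrix (Fin n) (Fin n) ℝ) (c : Fin k → ℝ)
    (v : Fin n → ℝ) : ℝ :=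
  fFun A c v / edot v v

/-- The Toh matrix `A(ω, ε)`. -/
noncomputable def tohMatrix (ω ε : ℝ) : Matrix (Fin 4) (Fin 4) ℝ :=
  !![1, ε, 0, 0; 0, -1, ω / ε, 0; 0, 0, 1, ε; 0, 0, 0, -1]

/-- `p` is a `k`-th worst-case GMRES polynomial of `A`. -/
def IsWCPoly {ι : Type*} [Fintype ι] [DecidableEq ι]
    (A : Matrix ι ι ℝ) (k : ℕ) (p : Polynomial ℝ) : Prop :=
  IsPik k p ∧ ∃ b : ι → ℝ, euclNorm b = 1 ∧
    (∀ q : Polynomial ℝ, IsPik k q →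
      euclNorm ((Polynomial.aeval A p).mulVec b) ≤ euclNorm ((Polynomial.aeval A q).mulVec b)) ∧
    euclNorm ((Polynomial.aeval A p).mulVec b) = Psi A k

/-- The spectral (Euclidean operator) norm of a real matrix. -/
noncomputable def specNorm {ι : Type*} [Fintype ι] (M : Matrix ι ι ℝ) : ℝ :=
  sSup {r : ℝ | ∃ v : ι → ℝ, euclNorm v = 1 ∧ r = euclNorm (M *ᵥ v)}

/-- The `k`-th ideal GMRES approximation `φ_k(A) = min_{p ∈ π_k} ‖p(A)‖`. -/
noncomputable def phiIdeal {ι : Type*} [Fintype ι] [DecidableEq ι]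
    (A : Matrix ι ι ℝ) (k : ℕ) : ℝ :=
  sInf {r : ℝ | ∃ p : Polynomial ℝ, IsPik k p ∧ r = specNorm (Polynomial.aeval A p)}

/-- Complexification of a real matrix. -/
noncomputable def matC {ι : Type*} (A : Matrix ι ι ℝ) : Matrix ι ι ℂ :=
  A.map fun x => (x : ℂ)

/-- Complexification of a real vector. -/
noncomputable def vecC {ι : Type*} (b : ι → ℝ) : ι → ℂ := fun i => (b i : ℂ)

/-- `Ψ_{k,ℂ,ℝ}(A)`: complex polynomials, real initial vectors. -/
noncomputable def PsiCR {ι : Type*} [Fintype ι] [DecidableEq ι]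
    (A : Matrix ι ι ℝ) (k : ℕ) : ℝ :=
  sSup {r : ℝ | ∃ b : ι → ℝ, euclNorm b = 1 ∧
    r = sInf {s : ℝ | ∃ p : Polynomial ℂ, IsPikC k p ∧
      s = euclNormC ((Polynomial.aeval (matC A) p).mulVec (vecC b))}}

/-- `Ψ_{k,ℂ,ℂ}(A)`: complex polynomials, complex initial vectors. -/
noncomputable def PsiCC {ι : Type*} [Fintype ι] [DecidableEq ι]
    (A : Matrix ι ι ℝ) (k : ℕ) : ℝ :=
  sSup {r : ℝ | ∃ b : ι → ℂ, euclNormC b = 1 ∧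
    r = sInf {s : ℝ | ∃ p : Polynomial ℂ, IsPikC k p ∧
      s = euclNormC ((Polynomial.aeval (matC A) p).mulVec b)}}

/-- `Ψ_{k,ℝ,ℂ}(A)`: real polynomials, complex initial vectors. -/
noncomputable def PsiRC {ι : Type*} [Fintype ι] [DecidableEq ι]
    (A : Matrix ι ι ℝ) (k : ℕ) : ℝ :=
  sSup {r : ℝ | ∃ b : ι → ℂ, euclNormC b = 1 ∧
    r = sInf {s : ℝ | ∃ p : Polynomial ℝ, IsPik k p ∧
      s = euclNormC ((Polynomial.aeval (matC A) (p.map (algebraMap ℝ ℂ))).mulVec b)}}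

/-- `φ_{k,ℝ,ℝ}(A)`. -/
noncomputable def phiRR {ι : Type*} [Fintype ι] [DecidableEq ι]
    (A : Matrix ι ι ℝ) (k : ℕ) : ℝ :=
  sInf {r : ℝ | ∃ p : Polynomial ℝ, IsPik k p ∧
    r = sSup {s : ℝ | ∃ b : ι → ℝ, euclNorm b = 1 ∧
      s = euclNorm ((Polynomial.aeval A p).mulVec b)}}

/-- `φ_{k,ℂ,ℝ}(A)`. -/
noncomputable def phiCR {ι : Type*} [Fintype ι] [DecidableEq ι]
    (A : Matrix ι ι ℝ) (k : ℕ) : ℝ :=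
  sInf {r : ℝ | ∃ p : Polynomial ℂ, IsPikC k p ∧
    r = sSup {s : ℝ | ∃ b : ι → ℝ, euclNorm b = 1 ∧
      s = euclNormC ((Polynomial.aeval (matC A) p).mulVec (vecC b))}}

/-- `φ_{k,ℝ,ℂ}(A)`. -/
noncomputable def phiRC {ι : Type*} [Fintype ι] [DecidableEq ι]
    (A : Matrix ι ι ℝ) (k : ℕ) : ℝ :=
  sInf {r : ℝ | ∃ p : Polynomial ℝ, IsPik k p ∧
    r = sSup {s : ℝ | ∃ b : ι → ℂ, euclNormC b = 1 ∧
      s = euclNormC ((Polynomial.aeval (matC A) (p.map (algebraMap ℝ ℂ))).mulVec b)}}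

/-- `φ_{k,ℂ,ℂ}(A)`. -/
noncomputable def phiCC {ι : Type*} [Fintype ι] [DecidableEq ι]
    (A : Matrix ι ι ℝ) (k : ℕ) : ℝ :=
  sInf {r : ℝ | ∃ p : Polynomial ℂ, IsPikC k p ∧
    r = sSup {s : ℝ | ∃ b : ι → ℂ, euclNormC b = 1 ∧
      s = euclNormC ((Polynomial.aeval (matC A) p).mulVec b)}}

/-!
The coefficientwise real part of `p ∈ π_{k,ℂ}` lies in `π_{k,ℝ}`, and since `A` is real, for real
`b` the vector `(Re p)(A) b` is the real part of `p(A) b` and hence no longer than it. So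
`φ_{k,ℝ,ℝ} ≤ φ_{k,ℂ,ℝ}`; enlarging the set of vectors and shrinking the set of polynomials gives
`φ_{k,ℂ,ℝ} ≤ φ_{k,ℂ,ℂ} ≤ φ_{k,ℝ,ℂ}`. The circle closes because a real matrix acts separately on
the real and imaginary parts of a complex vector, so it has the same operator norm over `ℝ` and
over `ℂ`.
-/

lemma csInf_le_csInf_of_forall_exists_le {α β γ : Type*} [ConditionallyCompleteLattice γ]
    {P : α → Prop} {Q : β → Prop} {f : α → γ} {g : β → γ} {c : γ} (hf : ∀ a, P a → c ≤ f a)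
    (hQ : ∃ b, Q b) (h : ∀ b, Q b → ∃ a, P a ∧ f a ≤ g b) :
    sInf {r | ∃ a, P a ∧ r = f a} ≤ sInf {r | ∃ b, Q b ∧ r = g b} := by
  obtain ⟨b₀, hb₀⟩ := hQ
  refine le_csInf ⟨_, b₀, hb₀, rfl⟩ ?_
  rintro _ ⟨b, hb, rfl⟩
  obtain ⟨a, ha, hab⟩ := h b hb
  have hbdd : BddBelow {r | ∃ a, P a ∧ r = f a} := by
    refine ⟨c, ?_⟩
    rintro _ ⟨a, ha, rfl⟩
    exact hf a ha
  exact (csInf_le hbdd ⟨a, ha, rfl⟩).trans hab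

section EuclideanNorm

variable {ι : Type*} [Fintype ι]

lemma norm_toLp_real (v : ι → ℝ) : ‖WithLp.toLp 2 v‖ = euclNorm v := by
  simp [EuclideanSpace.norm_eq, euclNorm]

lemma norm_toLp_complex (v : ι → ℂ) : ‖WithLp.toLp 2 v‖ = euclNormC v :=
  EuclideanSpace.norm_eq _

lemma euclNormC_nonneg (v : ι → ℂ) : 0 ≤ euclNormC v := Real.sqrt_nonneg _

lemma euclNormC_vecC (v : ι → ℝ) : euclNormC (vecC v) = euclNorm v := by
  simp [euclNormC, euclNorm, vecC]

lemma euclNormC_sq (v : ι → ℂ) :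
    euclNormC v ^ 2 = euclNorm (fun i => (v i).re) ^ 2 + euclNorm (fun i => (v i).im) ^ 2 := by
  have sq_sqrt_sum (x : ι → ℝ) : √(∑ i, x i ^ 2) ^ 2 = ∑ i, x i ^ 2 :=
    Real.sq_sqrt (Finset.sum_nonneg fun _ _ => sq_nonneg _)
  simp only [euclNormC, euclNorm, sq_sqrt_sum]
  simp only [← Finset.sum_add_distrib, Complex.sq_norm, Complex.normSq_apply, ← sq]

lemma euclNorm_re_le (v : ι → ℂ) : euclNorm (fun i => (v i).re) ≤ euclNormC v := by
  refine le_of_sq_le_sq ?_ (euclNormC_nonneg v)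
  rw [euclNormC_sq]
  exact le_add_of_nonneg_right (sq_nonneg _)

end EuclideanNorm

section MulVec

variable {m n : Type*} [Fintype n]

lemma matC_mulVec_vecC (M : Matrix n n ℝ) (b : n → ℝ) : matC M *ᵥ vecC b = vecC (M *ᵥ b) := by
  ext i
  simp [matC, vecC, mulVec, dotProduct]

lemma re_matC_mulVec (M : Matrix n n ℝ) (b : n → ℂ) :
    (fun i => ((matC M *ᵥ b) i).re) = M *ᵥ fun i => (b i).re := by
  ext i
  simp [matC, mulVec, dotProduct]

lemma im_matC_mulVec (M : Matrix n n ℝ) (b : n → ℂ) :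
    (fun i => ((matC M *ᵥ b) i).im) = M *ᵥ fun i => (b i).im := by
  ext i
  simp [matC, mulVec, dotProduct]

lemma map_re_mulVec (M : Matrix m n ℂ) (b : n → ℝ) :
    M.map Complex.re *ᵥ b = fun i => ((M *ᵥ vecC b) i).re := by
  ext i
  simp [vecC, mulVec, dotProduct]

end MulVec

section L2OpNorm

open scoped Matrix.Norms.L2Operator

variable {𝕜 m n : Type*} [RCLike 𝕜] [Fintype m] [Fintype n] [DecidableEq n]

lemma norm_toLp_mulVec_le (M : Matrix m n 𝕜) (v : n → 𝕜) :
    ‖WithLp.toLp 2 (M *ᵥ v)‖ ≤ ‖M‖ * ‖WithLp.toLp 2 v‖ :=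
  l2_opNorm_mulVec M (WithLp.toLp 2 v)

lemma l2_opNorm_le_of_unit_norm (M : Matrix m n 𝕜) {c : ℝ} (hc : 0 ≤ c)
    (h : ∀ b : n → 𝕜, ‖WithLp.toLp 2 b‖ = 1 → ‖WithLp.toLp 2 (M *ᵥ b)‖ ≤ c) : ‖M‖ ≤ c :=
  ContinuousLinearMap.opNorm_le_of_unit_norm hc fun b => h b.ofLp

lemma isLUB_norm_toLp_mulVec [Nonempty n] (M : Matrix m n 𝕜) :
    IsLUB {s : ℝ | ∃ b : n → 𝕜, ‖WithLp.toLp 2 b‖ = 1 ∧ s = ‖WithLp.toLp 2 (M *ᵥ b)‖} ‖M‖ := by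
  constructor
  · rintro _ ⟨b, hb, rfl⟩
    simpa only [hb, mul_one] using norm_toLp_mulVec_le M b
  · intro c hc
    have h_unit (b : n → 𝕜) (hb : ‖WithLp.toLp 2 b‖ = 1) : ‖WithLp.toLp 2 (M *ᵥ b)‖ ≤ c :=
      hc ⟨b, hb, rfl⟩
    have hc_nonneg : 0 ≤ c :=
      (norm_nonneg _).trans (h_unit (Pi.single (Classical.arbitrary n) 1) (by simp))
    exact l2_opNorm_le_of_unit_norm M hc_nonneg h_unit

lemma isLUB_euclNorm_mulVec [Nonempty n] (M : Matrix m n ℝ) :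
    IsLUB {s : ℝ | ∃ b : n → ℝ, euclNorm b = 1 ∧ s = euclNorm (M *ᵥ b)} ‖M‖ := by
  simpa only [norm_toLp_real] using isLUB_norm_toLp_mulVec M

lemma isLUB_euclNormC_mulVec [Nonempty n] (M : Matrix m n ℂ) :
    IsLUB {s : ℝ | ∃ b : n → ℂ, euclNormC b = 1 ∧ s = euclNormC (M *ᵥ b)} ‖M‖ := by
  simpa only [norm_toLp_complex] using isLUB_norm_toLp_mulVec M

lemma euclNorm_mulVec_le (M : Matrix m n ℝ) (v : n → ℝ) :
    euclNorm (M *ᵥ v) ≤ ‖M‖ * euclNorm v := by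
  simpa only [norm_toLp_real] using norm_toLp_mulVec_le M v

lemma euclNormC_mulVec_le (M : Matrix m n ℂ) (v : n → ℂ) :
    euclNormC (M *ᵥ v) ≤ ‖M‖ * euclNormC v := by
  simpa only [norm_toLp_complex] using norm_toLp_mulVec_le M v

lemma euclNormC_matC_mulVec_le (M : Matrix n n ℝ) (v : n → ℂ) :
    euclNormC (matC M *ᵥ v) ≤ ‖M‖ * euclNormC v := by
  have hsq (x : n → ℝ) : euclNorm (M *ᵥ x) ^ 2 ≤ (‖M‖ * euclNorm x) ^ 2 :=
    pow_le_pow_left₀ (Real.sqrt_nonneg _) (euclNorm_mulVec_le M x) 2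
  refine le_of_sq_le_sq ?_ (mul_nonneg (norm_nonneg M) (euclNormC_nonneg v))
  calc euclNormC (matC M *ᵥ v) ^ 2
      = euclNorm (M *ᵥ fun i => (v i).re) ^ 2 + euclNorm (M *ᵥ fun i => (v i).im) ^ 2 := by
        rw [euclNormC_sq, re_matC_mulVec, im_matC_mulVec]
    _ ≤ (‖M‖ * euclNorm fun i => (v i).re) ^ 2 + (‖M‖ * euclNorm fun i => (v i).im) ^ 2 :=
        add_le_add (hsq _) (hsq _)
    _ = (‖M‖ * euclNormC v) ^ 2 := by
        simp only [mul_pow, euclNormC_sq, mul_add]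

lemma l2_opNorm_matC (M : Matrix n n ℝ) : ‖matC M‖ = ‖M‖ := by
  apply le_antisymm
  · refine l2_opNorm_le_of_unit_norm (matC M) (norm_nonneg M) fun b hb => ?_
    rw [norm_toLp_complex] at hb ⊢
    simpa only [hb, mul_one] using euclNormC_matC_mulVec_le M b
  · refine l2_opNorm_le_of_unit_norm M (norm_nonneg (matC M)) fun b hb => ?_
    rw [norm_toLp_real] at hb ⊢
    simpa only [matC_mulVec_vecC, euclNormC_vecC, hb, mul_one]
      using euclNormC_mulVec_le (matC M) (vecC b)

end L2OpNorm

/-- The operator norm of a complex matrix restricted to real vectors, i.e. the norm of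
`b ↦ M b` as an `ℝ`-linear map `ℝⁿ → ℂᵐ`. It is the quantity minimized in `φ_{k,ℂ,ℝ}`. -/
noncomputable def normOnReal {m n : Type*} [Fintype m] [Fintype n] (M : Matrix m n ℂ) : ℝ :=
  sSup {s : ℝ | ∃ b : n → ℝ, euclNorm b = 1 ∧ s = euclNormC (M *ᵥ vecC b)}

section NormOnReal

open scoped Matrix.Norms.L2Operator

variable {m n : Type*} [Fintype m] [Fintype n]

lemma normOnReal_nonneg (M : Matrix m n ℂ) : 0 ≤ normOnReal M := by
  refine Real.sSup_nonneg ?_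
  rintro _ ⟨b, -, rfl⟩
  exact euclNormC_nonneg _

lemma euclNormC_mulVec_vecC_le_l2_opNorm [DecidableEq n] (M : Matrix m n ℂ) {b : n → ℝ}
    (hb : euclNorm b = 1) : euclNormC (M *ᵥ vecC b) ≤ ‖M‖ := by
  simpa only [euclNormC_vecC, hb, mul_one] using euclNormC_mulVec_le M (vecC b)

lemma normOnReal_le_l2_opNorm [DecidableEq n] (M : Matrix m n ℂ) : normOnReal M ≤ ‖M‖ := by
  refine Real.sSup_le ?_ (norm_nonneg M)
  rintro _ ⟨b, hb, rfl⟩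
  exact euclNormC_mulVec_vecC_le_l2_opNorm M hb

lemma euclNormC_mulVec_vecC_le_normOnReal (M : Matrix m n ℂ) {b : n → ℝ} (hb : euclNorm b = 1) :
    euclNormC (M *ᵥ vecC b) ≤ normOnReal M := by
  classical
  refine le_csSup ⟨‖M‖, ?_⟩ ⟨b, hb, rfl⟩
  rintro _ ⟨b', hb', rfl⟩
  exact euclNormC_mulVec_vecC_le_l2_opNorm M hb'

lemma l2_opNorm_map_re_le_normOnReal [DecidableEq n] [Nonempty n] (M : Matrix m n ℂ) :
    ‖M.map Complex.re‖ ≤ normOnReal M := by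
  refine (isLUB_euclNorm_mulVec (M.map Complex.re)).2 ?_
  rintro _ ⟨b, hb, rfl⟩
  rw [map_re_mulVec]
  exact (euclNorm_re_le _).trans (euclNormC_mulVec_vecC_le_normOnReal M hb)

end NormOnReal

/-- The coefficientwise real part of a complex polynomial; it carries `π_{k,ℂ}` to `π_{k,ℝ}`. -/
noncomputable def polyRe (p : ℂ[X]) : ℝ[X] :=
  ∑ i ∈ p.support, monomial i (p.coeff i).re

section PolyRe

lemma coeff_polyRe (p : ℂ[X]) (i : ℕ) : (polyRe p).coeff i = (p.coeff i).re := by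
  simp +contextual [polyRe, coeff_monomial]

lemma natDegree_polyRe_le (p : ℂ[X]) : (polyRe p).natDegree ≤ p.natDegree :=
  natDegree_le_iff_coeff_eq_zero.2 fun i hi => by
    rw [coeff_polyRe, coeff_eq_zero_of_natDegree_lt hi, Complex.zero_re]

variable {ι : Type*} [Fintype ι] [DecidableEq ι]

lemma matC_pow (A : Matrix ι ι ℝ) (i : ℕ) : matC A ^ i = matC (A ^ i) :=
  (map_pow Complex.ofRealHom.mapMatrix A i).symm

lemma aeval_polyRe (A : Matrix ι ι ℝ) (p : ℂ[X]) :
    aeval A (polyRe p) = (aeval (matC A) p).map Complex.re := by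
  rw [aeval_eq_sum_range' (Nat.lt_succ_of_le (natDegree_polyRe_le p)), aeval_eq_sum_range]
  simp only [coeff_polyRe, matC_pow]
  ext i j
  simp [matC, Matrix.sum_apply]

lemma aeval_matC_map (A : Matrix ι ι ℝ) (p : ℝ[X]) :
    aeval (matC A) (p.map (algebraMap ℝ ℂ)) = matC (aeval A p) := by
  rw [aeval_map_algebraMap]
  exact aeval_algHom_apply Complex.ofRealAm.mapMatrix A p

end PolyRe

lemma isPik_one (k : ℕ) : IsPik k 1 := by simp [IsPik]

lemma isPikC_one (k : ℕ) : IsPikC k 1 := by simp [IsPikC]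

lemma IsPik.isPikC_map {k : ℕ} {p : ℝ[X]} (hp : IsPik k p) :
    IsPikC k (p.map (algebraMap ℝ ℂ)) :=
  ⟨natDegree_map_le.trans hp.1, by rw [eval_zero_map, hp.2, map_one]⟩

lemma IsPikC.isPik_polyRe {k : ℕ} {p : ℂ[X]} (hp : IsPikC k p) : IsPik k (polyRe p) := by
  refine ⟨(natDegree_polyRe_le p).trans hp.1, ?_⟩
  rw [← coeff_zero_eq_eval_zero, coeff_polyRe, coeff_zero_eq_eval_zero, hp.2, Complex.one_re]

section IdealGMRES

open scoped Matrix.Norms.L2Operator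

variable {ι : Type*} [Fintype ι] [DecidableEq ι]

lemma phiRR_eq_sInf_l2_opNorm [Nonempty ι] (A : Matrix ι ι ℝ) (k : ℕ) :
    phiRR A k = sInf {r : ℝ | ∃ p : ℝ[X], IsPik k p ∧ r = ‖aeval A p‖} := by
  simp only [phiRR, (isLUB_euclNorm_mulVec _).csSup_eq (isLUB_euclNorm_mulVec _).nonempty]

lemma phiRC_eq_sInf_l2_opNorm [Nonempty ι] (A : Matrix ι ι ℝ) (k : ℕ) :
    phiRC A k = sInf {r : ℝ | ∃ p : ℝ[X], IsPik k p ∧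
      r = ‖aeval (matC A) (p.map (algebraMap ℝ ℂ))‖} := by
  simp only [phiRC, (isLUB_euclNormC_mulVec _).csSup_eq (isLUB_euclNormC_mulVec _).nonempty]

lemma phiCC_eq_sInf_l2_opNorm [Nonempty ι] (A : Matrix ι ι ℝ) (k : ℕ) :
    phiCC A k = sInf {r : ℝ | ∃ p : ℂ[X], IsPikC k p ∧ r = ‖aeval (matC A) p‖} := by
  simp only [phiCC, (isLUB_euclNormC_mulVec _).csSup_eq (isLUB_euclNormC_mulVec _).nonempty]

lemma phiRR_le_phiCR [Nonempty ι] (A : Matrix ι ι ℝ) (k : ℕ) : phiRR A k ≤ phiCR A k := by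
  rw [phiRR_eq_sInf_l2_opNorm]
  refine csInf_le_csInf_of_forall_exists_le (fun _ _ => norm_nonneg _) ⟨1, isPikC_one k⟩
    fun p hp => ⟨polyRe p, hp.isPik_polyRe, ?_⟩
  rw [aeval_polyRe]
  exact l2_opNorm_map_re_le_normOnReal _

lemma phiCR_le_phiCC [Nonempty ι] (A : Matrix ι ι ℝ) (k : ℕ) : phiCR A k ≤ phiCC A k := by
  rw [phiCC_eq_sInf_l2_opNorm]
  exact csInf_le_csInf_of_forall_exists_le (fun _ _ => normOnReal_nonneg _) ⟨1, isPikC_one k⟩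
    fun p hp => ⟨p, hp, normOnReal_le_l2_opNorm _⟩

lemma phiCC_le_phiRC [Nonempty ι] (A : Matrix ι ι ℝ) (k : ℕ) : phiCC A k ≤ phiRC A k := by
  rw [phiCC_eq_sInf_l2_opNorm, phiRC_eq_sInf_l2_opNorm]
  exact csInf_le_csInf_of_forall_exists_le (fun _ _ => norm_nonneg _) ⟨1, isPik_one k⟩
    fun _ hp => ⟨_, hp.isPikC_map, le_rfl⟩

lemma phiRC_eq_phiRR [Nonempty ι] (A : Matrix ι ι ℝ) (k : ℕ) : phiRC A k = phiRR A k := by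
  simp only [phiRC_eq_sInf_l2_opNorm, phiRR_eq_sInf_l2_opNorm, aeval_matC_map, l2_opNorm_matC]

lemma nonempty_of_dA_ne_zero {A : Matrix ι ι ℝ} (hA : dA A ≠ 0) : Nonempty ι := by
  by_contra h
  rw [not_nonempty_iff] at h
  exact hA (by rw [dA, minpoly.subsingleton, natDegree_one])

theorem ideal_gmres_real_eq_complex_general [Nonempty ι] (A : Matrix ι ι ℝ) (k : ℕ) :
    phiRR A k = phiCR A k ∧ phiCR A k = phiRC A k ∧ phiRC A k = phiCC A k := by
  have h₁ := phiRR_le_phiCR A k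
  have h₂ := phiCR_le_phiCC A k
  have h₃ := phiCC_le_phiRC A k
  have h₄ := phiRC_eq_phiRR A k
  refine ⟨?_, ?_, ?_⟩ <;> linarith

end IdealGMRES

/-- The ideal GMRES approximation of a nonsingular real matrix does not depend
on whether the polynomials and/or the maximizing vectors are real or complex:
`φ_{k,ℝ,ℝ}(A) = φ_{k,ℂ,ℝ}(A) = φ_{k,ℝ,ℂ}(A) = φ_{k,ℂ,ℂ}(A)`. -/
theorem ideal_gmres_real_eq_complex {n : ℕ} (A : Matrix (Fin n) (Fin n) ℝ)
    (hA : IsUnit A) (k : ℕ) (hk1 : 1 ≤ k) (hk2 : k ≤ dA A - 1) :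
    phiRR A k = phiCR A k ∧ phiCR A k = phiRC A k ∧ phiRC A k = phiCC A k := by
  have := nonempty_of_dA_ne_zero (A := A) (by omega)
  exact ideal_gmres_real_eq_complex_general A k
end

section
/- Let A ∈ ℝ^{n×n} be nonsingular and 1 ≤ k ≤ d(A) − 1. Suppose there exist two unit norm vectors b, c ∈ ℝ^n whose k-th GMRES polynomials p_b, p_c ∈ π_{k,ℝ} are distinct (p_b ≠ p_c) and which are both k-th worst-case GMRES initial vectors, i.e., ‖p_b(A)b‖ = ‖p_c(A)c‖ = Ψ_{k,ℝ,ℝ}(A). Then Ψ_{k,ℝ,ℝ}(A) < Ψ_{k,ℝ,ℂ}(A). -/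
open Polynomial Matrix

/-!
A complex initial vector `b + ic` with `b, c` real satisfies
`‖p(A)(b + ic)‖² = ‖p(A)b‖² + ‖p(A)c‖²` for every real polynomial `p`. If `b` and `c` are worst-case
vectors, then both summands are at least `Ψ²`, where `Ψ = Ψ_{k,ℝ,ℝ}(A) > 0`. Since `A` is
nonsingular and `Ψ > 0`, each GMRES polynomial is the only polynomial attaining its minimum, so no
single `p` attains both when `p_b ≠ p_c`. Hence the attained minimum of `‖p(A)(b + ic)‖²`
exceeds `2Ψ²`, while `‖b + ic‖² = 2`.
-/

lemma le_sSup_sInf {α β : Type*} {f : α → β → ℝ} {P : α → Prop} {Q : β → Prop} {a₀ : α}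
    {b : β} {s B : ℝ} (hf : ∀ a b, 0 ≤ f a b) (ha₀ : P a₀) (hB : ∀ b, Q b → f a₀ b ≤ B)
    (hb : Q b) (hs : ∀ a, P a → s ≤ f a b) :
    s ≤ sSup {r | ∃ b, Q b ∧ r = sInf {t | ∃ a, P a ∧ t = f a b}} := by
  have hbdd : BddAbove {r | ∃ b, Q b ∧ r = sInf {t | ∃ a, P a ∧ t = f a b}} := by
    use B
    rintro _ ⟨b', hb', rfl⟩
    refine csInf_le_of_le ⟨0, ?_⟩ ⟨a₀, ha₀, rfl⟩ (hB b' hb')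
    rintro _ ⟨a, -, rfl⟩
    exact hf a b'
  refine le_csSup_of_le hbdd ⟨b, hb, rfl⟩ (le_csInf ⟨_, a₀, ha₀, rfl⟩ ?_)
  rintro _ ⟨a, ha, rfl⟩
  exact hs a ha

lemma isPik_one_sub_iff {k : ℕ} {q : ℝ[X]} :
    IsPik k (1 - q) ↔ q ∈ degreeLT ℝ (k + 1) ⊓ LinearMap.ker (leval (0 : ℝ)) := by
  have hdeg : (1 - q).natDegree ≤ k ↔ q ∈ degreeLT ℝ (k + 1) := by
    rw [degreeLT_succ_eq_degreeLE, mem_degreeLE, ← natDegree_le_iff_degree_le]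
    refine ⟨fun h => ?_, fun h => ?_⟩
    · simpa using (natDegree_sub_le 1 (1 - q)).trans (max_le (by simp) h)
    · exact (natDegree_sub_le 1 q).trans (max_le (by simp) h)
  simp [IsPik, hdeg, leval_apply]

lemma exists_norm_sub_le {E : Type*} [NormedAddCommGroup E] [NormedSpace ℝ E]
    (V : Submodule ℝ E) [FiniteDimensional ℝ V] (x : E) :
    ∃ v ∈ V, ∀ w ∈ V, ‖x - v‖ ≤ ‖x - w‖ := by
  have htends : Filter.Tendsto (fun v : V => ‖x - v‖) (Filter.cocompact V) Filter.atTop := by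
    refine Filter.tendsto_atTop_mono (fun v => ?_)
      (Filter.tendsto_atTop_add_const_right _ (-‖x‖) (tendsto_norm_cocompact_atTop (E := V)))
    simpa [norm_sub_rev, ← sub_eq_add_neg] using norm_sub_norm_le (v : E) x
  obtain ⟨v, hv⟩ := Continuous.exists_forall_le (by fun_prop) htends
  exact ⟨v, v.2, fun w hw => hv ⟨w, hw⟩⟩

lemma exists_isPik_norm_le {E : Type*} [NormedAddCommGroup E] [NormedSpace ℝ E]
    (L : ℝ[X] →ₗ[ℝ] E) (k : ℕ) :
    ∃ p, IsPik k p ∧ ∀ q, IsPik k q → ‖L p‖ ≤ ‖L q‖ := by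
  obtain ⟨_, ⟨m, hm, rfl⟩, hmin⟩ := exists_norm_sub_le
    ((degreeLT ℝ (k + 1) ⊓ LinearMap.ker (leval (0 : ℝ))).map L) (L 1)
  refine ⟨1 - m, isPik_one_sub_iff.2 hm, fun q hq => ?_⟩
  have hq' : IsPik k (1 - (1 - q)) := by rwa [sub_sub_cancel]
  simpa using hmin _ (Submodule.mem_map_of_mem (isPik_one_sub_iff.1 hq'))

lemma IsPik.midpoint {k : ℕ} {p q : ℝ[X]} (hp : IsPik k p) (hq : IsPik k q) :
    IsPik k (midpoint ℝ p q) := by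
  rw [midpoint_eq_smul_add]
  refine ⟨(natDegree_smul_le _ _).trans ((natDegree_add_le _ _).trans (max_le hp.1 hq.1)), ?_⟩
  norm_num [hp.2, hq.2]

lemma eq_of_isPik_of_norm_le {E : Type*} [NormedAddCommGroup E] [NormedSpace ℝ E]
    [StrictConvexSpace ℝ E] (L : ℝ[X] →ₗ[ℝ] E) {k : ℕ} {p q : ℝ[X]} (hp : IsPik k p)
    (hmin : ∀ r, IsPik k r → ‖L p‖ ≤ ‖L r‖) (hq : IsPik k q) (hqp : ‖L q‖ ≤ ‖L p‖) :
    L p = L q := by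
  have heq : ‖L p‖ = ‖L q‖ := (hmin q hq).antisymm hqp
  refine eq_of_norm_eq_of_norm_add_eq heq ((norm_add_le _ _).antisymm ?_)
  have hmid := hmin _ (hp.midpoint hq)
  rw [midpoint_eq_smul_add, map_smul, map_add, norm_smul] at hmid
  norm_num at hmid
  linarith only [hmid, heq]

lemma exists_aeval_apply_eq_zero_iff_minpoly_dvd {K V : Type*} [Field K] [AddCommGroup V]
    [Module K V] [FiniteDimensional K V] (T : Module.End K V) :
    ∃ v : V, ∀ p : K[X], aeval T p v = 0 ↔ minpoly K T ∣ p := by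
  obtain ⟨x, hx⟩ := Module.exists_ker_toSpanSingleton_eq_annihilator K[X] (Module.AEval' T)
  obtain ⟨v, rfl⟩ := (Module.AEval'.of T).surjective x
  refine ⟨v, fun p => ?_⟩
  rw [← Ideal.mem_span_singleton, span_minpoly_eq_annihilator, ← hx, LinearMap.mem_ker,
    LinearMap.toSpanSingleton_apply, ← Module.AEval.of_aeval_smul, LinearEquiv.map_eq_zero_iff]
  rfl

section Matrix

variable {ι : Type*} [Fintype ι]

lemma euclNorm_eq_norm (v : ι → ℝ) : euclNorm v = ‖WithLp.toLp 2 v‖ := by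
  simp [euclNorm, EuclideanSpace.norm_eq]

lemma euclNormC_eq_norm (v : ι → ℂ) : euclNormC v = ‖WithLp.toLp 2 v‖ := by
  simp [euclNormC, EuclideanSpace.norm_eq]

lemma matC_mulVec_vecC_add_I_smul (M : Matrix ι ι ℝ) (b c : ι → ℝ) :
    matC M *ᵥ (vecC b + Complex.I • vecC c) = vecC (M *ᵥ b) + Complex.I • vecC (M *ᵥ c) := by
  have hvecC (v : ι → ℝ) : matC M *ᵥ vecC v = vecC (M *ᵥ v) :=
    funext fun i => (RingHom.map_mulVec Complex.ofRealHom M v i).symm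
  rw [mulVec_add, mulVec_smul, hvecC, hvecC]

lemma euclNormC_vecC_add_I_smul_sq (b c : ι → ℝ) :
    euclNormC (vecC b + Complex.I • vecC c) ^ 2 = euclNorm b ^ 2 + euclNorm c ^ 2 := by
  simp only [euclNorm_eq_norm, euclNormC_eq_norm, EuclideanSpace.norm_sq_eq,
    ← Finset.sum_add_distrib]
  refine Finset.sum_congr rfl fun i _ => ?_
  rw [Complex.sq_norm, Complex.normSq_apply]
  simp [vecC, sq]

variable [DecidableEq ι]

lemma exists_aeval_mulVec_eq_zero_iff_minpoly_dvd {K : Type*} [Field K] (A : Matrix ι ι K) :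
    ∃ v : ι → K, ∀ p : K[X], aeval A p *ᵥ v = 0 ↔ minpoly K A ∣ p := by
  obtain ⟨v, hv⟩ := exists_aeval_apply_eq_zero_iff_minpoly_dvd (toLinAlgEquiv' A)
  refine ⟨v, fun p => ?_⟩
  rw [← toLinAlgEquiv'_apply, ← aeval_algHom_apply, hv, minpoly.algEquiv_eq]

lemma eq_zero_of_aeval_mulVec_eq_zero {K : Type*} [Field K] {A : Matrix ι ι K} (hA : IsUnit A)
    {k : ℕ} {v : ι → K} (hv : ∀ p : K[X], p.natDegree ≤ k → p.eval 0 = 1 → aeval A p *ᵥ v ≠ 0)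
    {q : K[X]} (hq : q.natDegree ≤ k) (hqv : aeval A q *ᵥ v = 0) : q = 0 := by
  induction q using recOnHorner with
  | M0 => rfl
  | MC p a hp ha _ =>
    refine absurd ?_ (hv (C a⁻¹ * (p + C a)) ((natDegree_C_mul_le _ _).trans hq) ?_)
    · rw [map_mul, ← mulVec_mulVec, hqv, mulVec_zero]
    · simp [← coeff_zero_eq_eval_zero, hp, ha]
  | MX p hp ih =>
    have hpv : aeval A p *ᵥ v = 0 := by
      refine mulVec_injective_of_isUnit hA ?_
      rw [mulVec_zero, mulVec_mulVec, ← hqv, mul_comm p X, map_mul, aeval_X]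
    have hpk : p.natDegree ≤ k :=
      (natDegree_le_of_dvd (dvd_mul_right p X) (mul_ne_zero hp X_ne_zero)).trans hq
    exact absurd (ih hpk hpv) hp

section RCLike

variable {𝕜 : Type*} [RCLike 𝕜]

/-- The GMRES residual `p(A)v` as a linear function of the real polynomial `p`, with values in the
Euclidean space so that its norm is the residual norm. -/
noncomputable def gmresResidual (A : Matrix ι ι 𝕜) (v : ι → 𝕜) :
    ℝ[X] →ₗ[ℝ] EuclideanSpace 𝕜 ι :=
  (WithLp.linearEquiv 2 ℝ (ι → 𝕜)).symm.toLinearMap ∘ₗ (mulVecBilin ℝ ℝ).flip v ∘ₗ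
    (aeval A).toLinearMap

lemma gmresResidual_apply (A : Matrix ι ι 𝕜) (v : ι → 𝕜) (p : ℝ[X]) :
    gmresResidual A v p = WithLp.toLp 2 (aeval A p *ᵥ v) := rfl

/-- The quantity `Ψ_{k,ℝ,𝕜}(A)` for a matrix over `𝕜`: real polynomials, initial vectors in `𝕜ⁿ`. -/
noncomputable def worstCaseGmres (A : Matrix ι ι 𝕜) (k : ℕ) : ℝ :=
  sSup {r : ℝ | ∃ v : ι → 𝕜, ‖WithLp.toLp 2 v‖ = 1 ∧
    r = sInf {s : ℝ | ∃ p : ℝ[X], IsPik k p ∧ s = ‖gmresResidual A v p‖}}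

lemma div_norm_le_worstCaseGmres {A : Matrix ι ι 𝕜} {k : ℕ} {v : ι → 𝕜} {m : ℝ} (hv : v ≠ 0)
    (hm : ∀ p, IsPik k p → m ≤ ‖gmresResidual A v p‖) :
    m / ‖WithLp.toLp 2 v‖ ≤ worstCaseGmres A k := by
  have hpos : 0 < ‖WithLp.toLp 2 v‖ := by simpa using hv
  refine le_sSup_sInf (f := fun p v => ‖gmresResidual A v p‖) (a₀ := 1) (B := 1)
    (b := ‖WithLp.toLp 2 v‖⁻¹ • v) (fun _ _ => norm_nonneg _) (isPik_one k) ?_ ?_ fun p hp => ?_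
  · intro w hw
    simp [gmresResidual_apply, hw]
  · rw [WithLp.toLp_smul, norm_smul, norm_inv, norm_norm, inv_mul_cancel₀ hpos.ne']
  · rw [gmresResidual_apply, mulVec_smul, WithLp.toLp_smul, norm_smul, norm_inv, norm_norm,
      div_eq_inv_mul]
    gcongr
    exact hm p hp

end RCLike

lemma Psi_eq_worstCaseGmres (A : Matrix ι ι ℝ) (k : ℕ) : Psi A k = worstCaseGmres A k := by
  simp only [Psi, gmresVal, euclNorm_eq_norm, worstCaseGmres, gmresResidual_apply]

lemma PsiRC_eq_worstCaseGmres (A : Matrix ι ι ℝ) (k : ℕ) :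
    PsiRC A k = worstCaseGmres (matC A) k := by
  simp only [PsiRC, euclNormC_eq_norm, worstCaseGmres, gmresResidual_apply, aeval_map_algebraMap]

lemma Psi_pos {A : Matrix ι ι ℝ} {k : ℕ} (hk : k < dA A) : 0 < Psi A k := by
  obtain ⟨v, hv⟩ := exists_aeval_mulVec_eq_zero_iff_minpoly_dvd A
  have hres : ∀ p, IsPik k p → aeval A p *ᵥ v ≠ 0 := by
    intro p hp h0
    have hp0 : p ≠ 0 := by
      rintro rfl
      simpa using hp.2
    exact hk.not_ge ((natDegree_le_of_dvd ((hv p).1 h0) hp0).trans hp.1)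
  have hv0 : v ≠ 0 := by
    rintro rfl
    exact hres 1 (isPik_one k) (mulVec_zero _)
  obtain ⟨p, hp, hmin⟩ := exists_isPik_norm_le (gmresResidual A v) k
  rw [Psi_eq_worstCaseGmres]
  refine lt_of_lt_of_le (div_pos ?_ ?_) (div_norm_le_worstCaseGmres hv0 hmin)
  · simpa [gmresResidual_apply] using hres p hp
  · simpa using hv0

lemma IsGmresPoly.euclNorm_lt {A : Matrix ι ι ℝ} (hA : IsUnit A) {k : ℕ} {b : ι → ℝ}
    {p q : ℝ[X]} (hp : IsGmresPoly A k b p) (hpos : 0 < euclNorm (aeval A p *ᵥ b))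
    (hq : IsPik k q) (hpq : p ≠ q) :
    euclNorm (aeval A p *ᵥ b) < euclNorm (aeval A q *ᵥ b) := by
  by_contra! hle
  have hres : gmresResidual A b p = gmresResidual A b q :=
    eq_of_isPik_of_norm_le _ hp.1
      (by simpa only [gmresResidual_apply, euclNorm_eq_norm] using hp.2) hq
      (by simpa only [gmresResidual_apply, euclNorm_eq_norm] using hle)
  have hne : ∀ r : ℝ[X], r.natDegree ≤ k → r.eval 0 = 1 → aeval A r *ᵥ b ≠ 0 := by
    intro r hrk hr1 h0
    simpa [h0, euclNorm] using hpos.trans_le (hp.2 r ⟨hrk, hr1⟩)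
  refine hpq (sub_eq_zero.1 (eq_zero_of_aeval_mulVec_eq_zero hA hne
    ((natDegree_sub_le p q).trans (max_le hp.1.1 hq.1)) ?_))
  rwa [map_sub, sub_mulVec, sub_eq_zero, ← (WithLp.toLp_injective 2).eq_iff]

lemma aeval_matC (A : Matrix ι ι ℝ) (p : ℝ[X]) : aeval (matC A) p = matC (aeval A p) :=
  aeval_algHom_apply Complex.ofRealAm.mapMatrix A p

lemma norm_gmresResidual_vecC_add_I_smul_sq (A : Matrix ι ι ℝ) (b c : ι → ℝ) (p : ℝ[X]) :
    ‖gmresResidual (matC A) (vecC b + Complex.I • vecC c) p‖ ^ 2 =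
      euclNorm (aeval A p *ᵥ b) ^ 2 + euclNorm (aeval A p *ᵥ c) ^ 2 := by
  rw [gmresResidual_apply, ← euclNormC_eq_norm, aeval_matC, matC_mulVec_vecC_add_I_smul,
    euclNormC_vecC_add_I_smul_sq]

lemma IsGmresPoly.two_mul_sq_lt {A : Matrix ι ι ℝ} (hA : IsUnit A) {k : ℕ} {b c : ι → ℝ}
    {pb pc q : ℝ[X]} {m : ℝ} (hm : 0 < m) (hpb : IsGmresPoly A k b pb)
    (hpc : IsGmresPoly A k c pc) (hb : euclNorm (aeval A pb *ᵥ b) = m)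
    (hc : euclNorm (aeval A pc *ᵥ c) = m) (hne : pb ≠ pc) (hq : IsPik k q) :
    2 * m ^ 2 < euclNorm (aeval A q *ᵥ b) ^ 2 + euclNorm (aeval A q *ᵥ c) ^ 2 := by
  have hle_b : m ≤ euclNorm (aeval A q *ᵥ b) := hb ▸ hpb.2 q hq
  have hle_c : m ≤ euclNorm (aeval A q *ᵥ c) := hc ▸ hpc.2 q hq
  rcases ne_or_eq pb q with hbq | rfl
  · have hlt : m < euclNorm (aeval A q *ᵥ b) :=
      hb ▸ hpb.euclNorm_lt hA (hb.symm ▸ hm) hq hbq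
    nlinarith
  · have hlt : m < euclNorm (aeval A pb *ᵥ c) :=
      hc ▸ hpc.euclNorm_lt hA (hc.symm ▸ hm) hq hne.symm
    nlinarith

theorem two_worst_case_polynomials_imply_strict_complex_gap_general {A : Matrix ι ι ℝ}
    (hA : IsUnit A) {k : ℕ} (hk : k < dA A) {b c : ι → ℝ} (hb : euclNorm b = 1)
    (hc : euclNorm c = 1) {pb pc : ℝ[X]} (hpb : IsGmresPoly A k b pb)
    (hpc : IsGmresPoly A k c pc) (hne : pb ≠ pc)
    (hwb : euclNorm (aeval A pb *ᵥ b) = Psi A k) (hwc : euclNorm (aeval A pc *ᵥ c) = Psi A k) :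
    Psi A k < PsiRC A k := by
  set x : ι → ℂ := vecC b + Complex.I • vecC c
  have hx : ‖WithLp.toLp 2 x‖ ^ 2 = 2 := by
    rw [← euclNormC_eq_norm, euclNormC_vecC_add_I_smul_sq, hb, hc]
    norm_num
  have hx0 : x ≠ 0 := by
    intro h
    simp [h] at hx
  obtain ⟨p, hp, hmin⟩ := exists_isPik_norm_le (gmresResidual (matC A) x) k
  have hgap : (Psi A k * ‖WithLp.toLp 2 x‖) ^ 2 < ‖gmresResidual (matC A) x p‖ ^ 2 := by
    rw [mul_pow, hx, mul_comm, norm_gmresResidual_vecC_add_I_smul_sq]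
    exact hpb.two_mul_sq_lt hA (Psi_pos hk) hpc hwb hwc hne hp
  calc
    Psi A k < ‖gmresResidual (matC A) x p‖ / ‖WithLp.toLp 2 x‖ :=
      (lt_div_iff₀ (by simpa using hx0)).2 (lt_of_pow_lt_pow_left₀ 2 (norm_nonneg _) hgap)
    _ ≤ worstCaseGmres (matC A) k := div_norm_le_worstCaseGmres hx0 hmin
    _ = PsiRC A k := (PsiRC_eq_worstCaseGmres A k).symm

end Matrix

/-- If there are two unit norm vectors `b, c` whose `k`-th GMRES polynomials
`p_b ≠ p_c` are distinct and which are both `k`-th worst-case GMRES initial vectors, then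
`Ψ_{k,ℝ,ℝ}(A) < Ψ_{k,ℝ,ℂ}(A)`. -/
theorem two_worst_case_polynomials_imply_strict_complex_gap {n : ℕ}
    (A : Matrix (Fin n) (Fin n) ℝ)
    (hA : IsUnit A) (k : ℕ) (hk1 : 1 ≤ k) (hk2 : k ≤ dA A - 1)
    (b c : Fin n → ℝ) (hb : euclNorm b = 1) (hc : euclNorm c = 1)
    (pb pc : Polynomial ℝ) (hpb : IsGmresPoly A k b pb) (hpc : IsGmresPoly A k c pc)
    (hne : pb ≠ pc)
    (hwb : euclNorm ((Polynomial.aeval A pb).mulVec b) = Psi A k)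
    (hwc : euclNorm ((Polynomial.aeval A pc).mulVec c) = Psi A k) :
    Psi A k < PsiRC A k := by
  exact two_worst_case_polynomials_imply_strict_complex_gap_general hA (by omega) hb hc hpb hpc hne
    hwb hwc
end
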